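/- arXiv:1503.04135 — 10 statements merged into one kernel-verified Lean document; each statement's English description precedes it below -/
import Mathlib

section
/- Let μ be a probability measure on a measurable space Ω and let A, B, C be events with μ(A) > 0 and μ(B) > 0 (hence μ(A ∪ B) > 0). Set x = p(C|B), y = p(B|A), t = p(A|A ∪ B), and z = p(C|A). Then z ≥ x·y − (1 − t)(1 − x)/t; in particular z ≥ max{0, x·y − (1 − t)(1 − x)/t}. (Lower probability bound of the Weak Transitivity propagation rule, Theorem 3 of the paper, for the case t > 0.) -/
open MeasureTheory

/-- Conditional probability `p(E|H) = μ(E ∩ H) / μ(H)` as a real number. -/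
noncomputable def condProb {Ω : Type*} [MeasurableSpace Ω] (μ : Measure Ω) (E H : Set Ω) : ℝ :=
  (μ (E ∩ H)).toReal / (μ H).toReal

theorem weak_transitivity_lower_bound {Ω : Type*} [MeasurableSpace Ω]
    (μ : Measure Ω) [IsProbabilityMeasure μ] (A B C : Set Ω)
    (hA : MeasurableSet A) (hB : MeasurableSet B) (hC : MeasurableSet C)
    (hApos : 0 < μ A) (hBpos : 0 < μ B)
    (x y t z : ℝ)
    (hx : x = condProb μ C B) (hy : y = condProb μ B A)
    (ht : t = condProb μ A (A ∪ B)) (hz : z = condProb μ C A) :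
    x * y - (1 - t) * (1 - x) / t ≤ z ∧
      max 0 (x * y - (1 - t) * (1 - x) / t) ≤ z := by
  have ha : 0 < μ.real A := ENNReal.toReal_pos hApos.ne' (measure_ne_top μ A)
  have hb : 0 < μ.real B := ENNReal.toReal_pos hBpos.ne' (measure_ne_top μ B)
  have hu : μ.real (A ∪ B) + μ.real (A ∩ B) = μ.real A + μ.real B :=
    measureReal_union_add_inter hB
  have hmb : μ.real (A ∩ B) ≤ μ.real B := measureReal_mono Set.inter_subset_right
  have hcb : μ.real (C ∩ B) ≤ μ.real (C ∩ A) + (μ.real B - μ.real (A ∩ B)) := by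
    have h1 : μ.real (B ∩ A) + μ.real (B \ A) = μ.real B :=
      measureReal_inter_add_sdiff hA
    have h2 : μ.real (C ∩ B) ≤ μ.real ((C ∩ A) ∪ (B \ A)) := by
      refine measureReal_mono ?_ (measure_ne_top μ _)
      intro w hw
      by_cases h : w ∈ A
      · exact Or.inl ⟨hw.1, h⟩
      · exact Or.inr ⟨hw.2, h⟩
    have h3 := measureReal_union_le (μ := μ) (C ∩ A) (B \ A)
    rw [Set.inter_comm B A] at h1
    linarith
  have hz0 : 0 ≤ z := by
    rw [hz]; unfold condProb; positivity
  have hx' : x = μ.real (C ∩ B) / μ.real B := hx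
  have hy' : y = μ.real (A ∩ B) / μ.real A := by
    rw [hy, Set.inter_comm A B]; rfl
  have ht' : t = μ.real A / μ.real (A ∪ B) := by
    rw [ht]; unfold condProb
    rw [Set.inter_eq_left.mpr Set.subset_union_left]; rfl
  have hz' : z = μ.real (C ∩ A) / μ.real A := hz
  have hupos : 0 < μ.real (A ∪ B) := by linarith
  have key : x * y - (1 - t) * (1 - x) / t ≤ z := by
    have e : x * y - (1 - t) * (1 - x) / t
        = (μ.real (C ∩ B) - (μ.real B - μ.real (A ∩ B))) / μ.real A := by
      have hm : μ.real (A ∩ B) = μ.real A + μ.real B - μ.real (A ∪ B) := by linarith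
      rw [hx', hy', ht', hm]
      field_simp
      ring
    rw [e, hz']
    gcongr
    linarith
  exact ⟨key, max_le hz0 key⟩
end

section
/- Let μ be a probability measure on a measurable space Ω and let A, B, C be events with μ(A) > 0 and μ(B) > 0 (hence μ(A ∪ B) > 0). Set x = p(C|B), y = p(B|A), t = p(A|A ∪ B), and z = p(C|A). Then z ≤ (1 − x)(1 − y) + x/t; in particular z ≤ min{1, (1 − x)(1 − y) + x/t}. (Upper probability bound of the Weak Transitivity propagation rule, Theorem 3 of the paper, for the case t > 0.) -/
open MeasureTheory

theorem weak_transitivity_upper_bound {Ω : Type*} [MeasurableSpace Ω]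
    (μ : Measure Ω) [IsProbabilityMeasure μ] (A B C : Set Ω)
    (hA : MeasurableSet A) (hB : MeasurableSet B) (hC : MeasurableSet C)
    (hApos : 0 < μ A) (hBpos : 0 < μ B)
    (x y t z : ℝ)
    (hx : x = condProb μ C B) (hy : y = condProb μ B A)
    (ht : t = condProb μ A (A ∪ B)) (hz : z = condProb μ C A) :
    z ≤ (1 - x) * (1 - y) + x / t ∧
      z ≤ min 1 ((1 - x) * (1 - y) + x / t) := by
  have hz1 : z ≤ 1 := by
    rw [hz]
    unfold condProb
    apply div_le_one_of_le₀ _ ENNReal.toReal_nonneg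
    exact measureReal_mono (μ := μ) Set.inter_subset_right
  have key : z ≤ (1 - x) * (1 - y) + x / t := by
    have ha : 0 < μ.real A := ENNReal.toReal_pos hApos.ne' (measure_ne_top _ _)
    have hb : 0 < μ.real B := ENNReal.toReal_pos hBpos.ne' (measure_ne_top _ _)
    have hu : μ.real (A ∪ B) + μ.real (A ∩ B) = μ.real A + μ.real B :=
      measureReal_union_add_inter hB
    have hd : μ.real (A ∩ B) + μ.real (A \ B) = μ.real A :=
      measureReal_inter_add_diff hB
    have hle : μ.real (C ∩ A) ≤ μ.real (A \ B) + μ.real (C ∩ B) := by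
      refine le_trans (measureReal_mono ?_) (measureReal_union_le _ _)
      intro w hw
      by_cases h : w ∈ B
      · exact Or.inr ⟨hw.1, h⟩
      · exact Or.inl ⟨hw.2, h⟩
    have hx' : x = μ.real (C ∩ B) / μ.real B := hx
    have hy' : y = μ.real (A ∩ B) / μ.real A := by
      rw [Set.inter_comm]; exact hy
    have ht' : t = μ.real A / μ.real (A ∪ B) := by
      have h : A ∩ (A ∪ B) = A := Set.inter_eq_left.mpr Set.subset_union_left
      rw [ht]; unfold condProb; rw [h]; rfl
    have hz' : z = μ.real (C ∩ A) / μ.real A := hz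
    have hu' : μ.real (A ∪ B) = μ.real A + μ.real B - μ.real (A ∩ B) := by linarith
    have hR : (1 - x) * (1 - y) + x / t
        = (μ.real A - μ.real (A ∩ B) + μ.real (C ∩ B)) / μ.real A := by
      rw [hx', hy', ht', div_div_eq_mul_div, hu']
      field_simp
      ring
    rw [hR, hz']
    gcongr
    linarith
  exact ⟨key, le_min hz1 key⟩
end

section
/- Let (x, y, t) ∈ [0,1]³ with t > 0 and y·t + 1 − t > 0, and let z be a real number with max{0, x·y − (1 − t)(1 − x)/t} ≤ z ≤ min{1, (1 − x)(1 − y) + x/t}. Then there exist a probability measure μ on a finite sample space and events A, B, C with μ(A) > 0 and μ(B) > 0 such that p(C|B) = x, p(B|A) = y, p(A|A ∪ B) = t, and p(C|A) = z. (Attainability direction of the Weak Transitivity propagation rule, Theorem 3 of the paper, for conditioning events of positive probability.) -/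
open MeasureTheory

theorem exists_measure_aux (w : Fin 6 → ℝ) (hw : ∀ i, 0 ≤ w i) (h1 : ∑ i, w i = 1) :
    ∃ (μ : Measure (Fin 6)) (_ : IsProbabilityMeasure μ),
      ∀ s : Finset (Fin 6), μ (s : Set (Fin 6)) = ENNReal.ofReal (∑ i ∈ s, w i) := by
  have key : ∀ s : Finset (Fin 6),
      (∑ i, ENNReal.ofReal (w i) • Measure.dirac i : Measure (Fin 6)) (s : Set (Fin 6))
        = ENNReal.ofReal (∑ i ∈ s, w i) := by
    intro s
    rw [ENNReal.ofReal_sum_of_nonneg (fun i _ => hw i)]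
    simp [Measure.finsetSum_apply, Set.indicator_apply, Finset.sum_ite_mem]
  refine ⟨_, ⟨?_⟩, key⟩
  have := key Finset.univ
  rw [h1] at this
  simpa using this

theorem weak_transitivity_attainability (x y t z : ℝ)
    (hx : x ∈ Set.Icc (0 : ℝ) 1) (hy : y ∈ Set.Icc (0 : ℝ) 1)
    (ht : t ∈ Set.Icc (0 : ℝ) 1) (htpos : 0 < t)
    (hyt : 0 < y * t + 1 - t)
    (hzl : max 0 (x * y - (1 - t) * (1 - x) / t) ≤ z)
    (hzu : z ≤ min 1 ((1 - x) * (1 - y) + x / t)) :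
    ∃ (μ : Measure (Fin 6)) (_ : IsProbabilityMeasure μ) (A B C : Set (Fin 6)),
      0 < μ A ∧ 0 < μ B ∧
      condProb μ C B = x ∧ condProb μ B A = y ∧
      condProb μ A (A ∪ B) = t ∧ condProb μ C A = z := by
  obtain ⟨hx0, hx1⟩ := hx
  obtain ⟨hy0, hy1⟩ := hy
  obtain ⟨ht0, ht1⟩ := ht
  obtain ⟨hz0, hzl⟩ := max_le_iff.1 hzl
  obtain ⟨hz1, hzu⟩ := le_min_iff.1 hzu
  have hl : x * y * t - (1 - t) * (1 - x) ≤ z * t := by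
    have := mul_le_mul_of_nonneg_right hzl ht0
    rwa [sub_mul, div_mul_cancel₀ _ htpos.ne'] at this
  have hu : z * t ≤ (1 - x) * (1 - y) * t + x := by
    have := mul_le_mul_of_nonneg_right hzu ht0
    rwa [add_mul, div_mul_cancel₀ _ htpos.ne'] at this
  have e1 := mul_nonneg hy0 ht0
  have e2 := mul_nonneg hz0 ht0
  have e3 := mul_nonneg hx0 hyt.le
  have e4 := mul_nonneg (sub_nonneg.2 hx1) hyt.le
  have e5 := mul_nonneg (sub_nonneg.2 hz1) ht0
  have e6 := mul_nonneg (sub_nonneg.2 hy1) ht0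
  obtain ⟨a, ha⟩ : ∃ a, a = min (y * t) (min (z * t) (x * (y * t + 1 - t))) := ⟨_, rfl⟩
  have a1 : a ≤ y * t := ha ▸ min_le_left _ _
  have a2 : a ≤ z * t := ha ▸ (min_le_right _ _).trans (min_le_left _ _)
  have a3 : a ≤ x * (y * t + 1 - t) := ha ▸ (min_le_right _ _).trans (min_le_right _ _)
  have a4 : 0 ≤ a := by rw [ha]; exact le_min e1 (le_min e2 e3)
  have a5 : z * t - (1 - y) * t ≤ a := by
    rw [ha]; refine le_min ?_ (le_min ?_ ?_) <;> nlinarith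
  have a6 : x * (y * t + 1 - t) - (1 - t) ≤ a := by
    rw [ha]; refine le_min ?_ (le_min ?_ ?_) <;> nlinarith
  obtain ⟨μ, hμ, h⟩ := exists_measure_aux
    ![a, y * t - a, z * t - a, (1 - y) * t - (z * t - a),
      x * (y * t + 1 - t) - a, (1 - t) - (x * (y * t + 1 - t) - a)]
    (by intro i; fin_cases i <;> simp <;> linarith)
    (by simp [Fin.sum_univ_succ]; ring)
  have hA : μ (({0, 1, 2, 3} : Finset (Fin 6)) : Set (Fin 6)) = ENNReal.ofReal t := by
    rw [h]; congr 1; simp [Finset.sum_insert]; ring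
  have hB : μ (({0, 1, 4, 5} : Finset (Fin 6)) : Set (Fin 6))
      = ENNReal.ofReal (y * t + 1 - t) := by
    rw [h]; congr 1; simp [Finset.sum_insert]; ring
  have hCB : μ (({0, 4} : Finset (Fin 6)) : Set (Fin 6))
      = ENNReal.ofReal (x * (y * t + 1 - t)) := by
    rw [h]; congr 1; simp [Finset.sum_insert]
  have hBA : μ (({0, 1} : Finset (Fin 6)) : Set (Fin 6)) = ENNReal.ofReal (y * t) := by
    rw [h]; congr 1; simp [Finset.sum_insert]
  have hCA : μ (({0, 2} : Finset (Fin 6)) : Set (Fin 6)) = ENNReal.ofReal (z * t) := by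
    rw [h]; congr 1; simp [Finset.sum_insert]
  refine ⟨μ, hμ, (({0, 1, 2, 3} : Finset (Fin 6)) : Set (Fin 6)),
    (({0, 1, 4, 5} : Finset (Fin 6)) : Set (Fin 6)),
    (({0, 2, 4} : Finset (Fin 6)) : Set (Fin 6)), ?_, ?_, ?_, ?_, ?_, ?_⟩
  · rw [hA]; simpa using htpos
  · rw [hB]; exact ENNReal.ofReal_pos.2 hyt
  · rw [condProb, ← Finset.coe_inter,
      show ({0, 2, 4} ∩ {0, 1, 4, 5} : Finset (Fin 6)) = {0, 4} by decide, hCB, hB,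
      ENNReal.toReal_ofReal e3, ENNReal.toReal_ofReal hyt.le, mul_div_cancel_right₀ _ hyt.ne']
  · rw [condProb, ← Finset.coe_inter,
      show ({0, 1, 4, 5} ∩ {0, 1, 2, 3} : Finset (Fin 6)) = {0, 1} by decide, hBA, hA,
      ENNReal.toReal_ofReal e1, ENNReal.toReal_ofReal ht0, mul_div_cancel_right₀ _ htpos.ne']
  · rw [condProb, Set.inter_eq_left.2 Set.subset_union_left, ← Finset.coe_union,
      show ({0, 1, 2, 3} ∪ {0, 1, 4, 5} : Finset (Fin 6)) = Finset.univ by decide, hA,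
      ENNReal.toReal_ofReal ht0]
    simp
  · rw [condProb, ← Finset.coe_inter,
      show ({0, 2, 4} ∩ {0, 1, 2, 3} : Finset (Fin 6)) = {0, 2} by decide, hCA, hA,
      ENNReal.toReal_ofReal e2, ENNReal.toReal_ofReal ht0, mul_div_cancel_right₀ _ htpos.ne']
end

section
/- Let (x, y, t) ∈ [0,1]³ with t > 0, y·t + 1 − t > 0, and t·(1 − x + x·y) ≤ 1 − x. Then there exist a probability measure μ on a finite sample space and events A, B, C with μ(A) > 0 and μ(B) > 0 such that p(C|B) = x, p(B|A) = y, p(A|A ∪ B) = t, and p(C|A) = 0. (Attainability of the lower bound z' = 0 in Theorem 3 of the paper, corresponding to the solvability of the linear system obtained by setting z = 0.) -/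
open MeasureTheory

/-- Total mass of a set for the four-atom measure. -/
noncomputable def fourAtom (a b c d : ℝ) : Measure (Fin 6) :=
  ENNReal.ofReal a • Measure.dirac 0 + ENNReal.ofReal b • Measure.dirac 1 +
  ENNReal.ofReal c • Measure.dirac 2 + ENNReal.ofReal d • Measure.dirac 3

open Classical in
lemma fourAtom_apply {a b c d : ℝ} (ha : 0 ≤ a) (hb : 0 ≤ b) (hc : 0 ≤ c) (hd : 0 ≤ d)
    (S : Set (Fin 6)) :
    fourAtom a b c d S = ENNReal.ofReal ((if (0 : Fin 6) ∈ S then a else 0) +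
      (if (1 : Fin 6) ∈ S then b else 0) + (if (2 : Fin 6) ∈ S then c else 0) +
      (if (3 : Fin 6) ∈ S then d else 0)) := by
  rw [ENNReal.ofReal_add (by positivity) (by positivity),
    ENNReal.ofReal_add (by positivity) (by positivity),
    ENNReal.ofReal_add (by positivity) (by positivity)]
  simp only [fourAtom, Measure.add_apply, Measure.smul_apply, smul_eq_mul,
    Measure.dirac_apply, Set.indicator_apply, Pi.one_apply, mul_ite, mul_one, mul_zero]
  congr 1 <;> [congr 1 <;> [congr 1 <;> [skip; skip]; skip]; skip] <;> split_ifs <;> simp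

theorem weak_transitivity_lower_zero_attainable (x y t : ℝ)
    (hx : x ∈ Set.Icc (0 : ℝ) 1) (hy : y ∈ Set.Icc (0 : ℝ) 1)
    (ht : t ∈ Set.Icc (0 : ℝ) 1) (htpos : 0 < t)
    (hyt : 0 < y * t + 1 - t)
    (hsolv : t * (1 - x + x * y) ≤ 1 - x) :
    ∃ (μ : Measure (Fin 6)) (_ : IsProbabilityMeasure μ) (A B C : Set (Fin 6)),
      0 < μ A ∧ 0 < μ B ∧
      condProb μ C B = x ∧ condProb μ B A = y ∧
      condProb μ A (A ∪ B) = t ∧ condProb μ C A = 0 := by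
  obtain ⟨hx0, hx1⟩ := hx
  obtain ⟨hy0, hy1⟩ := hy
  obtain ⟨ht0, ht1⟩ := ht
  have ha : 0 ≤ y * t := mul_nonneg hy0 ht0
  have hb : 0 ≤ (1 - y) * t := mul_nonneg (by linarith) ht0
  have hc : 0 ≤ x * (y * t + 1 - t) := mul_nonneg hx0 hyt.le
  have hd : 0 ≤ 1 - t - x * (y * t + 1 - t) := by nlinarith
  have key := fourAtom_apply ha hb hc hd
  have hA : fourAtom (y * t) ((1 - y) * t) (x * (y * t + 1 - t))
      (1 - t - x * (y * t + 1 - t)) {0, 1} = ENNReal.ofReal t := by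
    rw [key]; congr 1; simp; ring
  have hB : fourAtom (y * t) ((1 - y) * t) (x * (y * t + 1 - t))
      (1 - t - x * (y * t + 1 - t)) {0, 2, 3} = ENNReal.ofReal (y * t + 1 - t) := by
    rw [key]; congr 1; simp; ring
  refine ⟨fourAtom (y * t) ((1 - y) * t) (x * (y * t + 1 - t))
      (1 - t - x * (y * t + 1 - t)), ⟨?_⟩, {0, 1}, {0, 2, 3}, {2}, ?_, ?_, ?_, ?_, ?_, ?_⟩
  · rw [key, ← ENNReal.ofReal_one]; congr 1; simp; ring
  · rw [hA]; simpa using htpos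
  · rw [hB, ENNReal.ofReal_pos]; exact hyt
  · rw [condProb, hB, key, ENNReal.toReal_ofReal hyt.le]
    simp
    rw [ENNReal.toReal_ofReal hc]
    field_simp
  · rw [condProb, hA, key, ENNReal.toReal_ofReal ht0]
    simp
    rw [ENNReal.toReal_ofReal ha]
    field_simp
  · have h1 : ({0, 1} : Set (Fin 6)) ∩ ({0, 1} ∪ {0, 2, 3}) = {0, 1} :=
      Set.inter_eq_left.2 Set.subset_union_left
    have h2 : fourAtom (y * t) ((1 - y) * t) (x * (y * t + 1 - t))
      (1 - t - x * (y * t + 1 - t)) ({0, 1} ∪ {0, 2, 3}) = ENNReal.ofReal 1 := by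
      rw [key]; congr 1; simp; ring
    rw [condProb, h1, h2, hA, ENNReal.toReal_ofReal ht0]
    simp
  · rw [condProb, key]
    simp
end

section
/- Let (x, y, t) ∈ [0,1]³ with t > 0, y·t + 1 − t > 0, and t·(x + y − x·y) ≤ x. Then there exist a probability measure μ on a finite sample space and events A, B, C with μ(A) > 0 and μ(B) > 0 such that p(C|B) = x, p(B|A) = y, p(A|A ∪ B) = t, and p(C|A) = 1. (Attainability of the upper bound z'' = 1 in Theorem 3 of the paper, corresponding to the solvability of the linear system obtained by setting z = 1.) -/
open MeasureTheory

theorem weak_transitivity_upper_one_attainable (x y t : ℝ)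
    (hx : x ∈ Set.Icc (0 : ℝ) 1) (hy : y ∈ Set.Icc (0 : ℝ) 1)
    (ht : t ∈ Set.Icc (0 : ℝ) 1) (htpos : 0 < t)
    (hyt : 0 < y * t + 1 - t)
    (hsolv : t * (x + y - x * y) ≤ x) :
    ∃ (μ : Measure (Fin 6)) (_ : IsProbabilityMeasure μ) (A B C : Set (Fin 6)),
      0 < μ A ∧ 0 < μ B ∧
      condProb μ C B = x ∧ condProb μ B A = y ∧
      condProb μ A (A ∪ B) = t ∧ condProb μ C A = 1 := by
  obtain ⟨hx0, hx1⟩ := hx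
  obtain ⟨hy0, hy1⟩ := hy
  obtain ⟨ht0, ht1⟩ := ht
  -- weights of the atoms ABC, AC only, BC only, B only
  obtain ⟨a, ha⟩ : ∃ a, a = y * t := ⟨_, rfl⟩
  obtain ⟨b, hb⟩ : ∃ b, b = t * (1 - y) := ⟨_, rfl⟩
  obtain ⟨c, hc⟩ : ∃ c, c = x * (y * t + 1 - t) - y * t := ⟨_, rfl⟩
  obtain ⟨d, hd⟩ : ∃ d, d = (1 - x) * (y * t + 1 - t) := ⟨_, rfl⟩
  have ha0 : 0 ≤ a := by rw [ha]; positivity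
  have hb0 : 0 ≤ b := by rw [hb]; exact mul_nonneg ht0 (by linarith)
  have hc0 : 0 ≤ c := by rw [hc]; linarith
  have hd0 : 0 ≤ d := by rw [hd]; exact mul_nonneg (by linarith) hyt.le
  let μ : Measure (Fin 6) :=
    ENNReal.ofReal a • Measure.dirac 0 + ENNReal.ofReal b • Measure.dirac 1 +
    ENNReal.ofReal c • Measure.dirac 2 + ENNReal.ofReal d • Measure.dirac 3
  have key : ∀ s : Set (Fin 6), μ s = ENNReal.ofReal
      (a * s.indicator 1 0 + b * s.indicator 1 1 + c * s.indicator 1 2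
        + d * s.indicator 1 3) := by
    intro s
    have h : ∀ (r : ℝ) (i : Fin 6), 0 ≤ r → 0 ≤ r * s.indicator (1 : Fin 6 → ℝ) i :=
      fun r i hr => mul_nonneg hr (Set.indicator_nonneg (fun _ _ => zero_le_one) _)
    have hdirac : ∀ (r : ℝ) (i : Fin 6), ENNReal.ofReal (r * s.indicator (1 : Fin 6 → ℝ) i)
        = ENNReal.ofReal r * Measure.dirac i s := by
      intro r i
      by_cases hi : i ∈ s <;> simp [hi]
    have h0 := h a 0 ha0
    have h1 := h b 1 hb0
    have h2 := h c 2 hc0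
    have h3 := h d 3 hd0
    rw [ENNReal.ofReal_add (by positivity) h3, ENNReal.ofReal_add (by positivity) h2,
      ENNReal.ofReal_add h0 h1, hdirac, hdirac, hdirac, hdirac]
    simp only [μ, Measure.add_apply, Measure.smul_apply, smul_eq_mul]
  have hA : μ {0, 1} = ENNReal.ofReal t := by
    rw [key]; congr 1; simp [Set.indicator]; rw [ha, hb]; ring
  have hB : μ {0, 2, 3} = ENNReal.ofReal (y * t + 1 - t) := by
    rw [key]; congr 1; simp [Set.indicator]; rw [ha, hc, hd]; ring
  have hCB : μ ({0, 1, 2} ∩ {0, 2, 3}) = ENNReal.ofReal (x * (y * t + 1 - t)) := by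
    rw [key]; congr 1; simp [Set.indicator]; rw [ha, hc]; ring
  have hBA : μ ({0, 2, 3} ∩ {0, 1}) = ENNReal.ofReal (y * t) := by
    rw [key]; congr 1; simp [Set.indicator]; rw [ha]
  have hAAB : μ ({0, 1} ∩ ({0, 1} ∪ {0, 2, 3})) = ENNReal.ofReal t := by
    rw [Set.inter_eq_left.2 Set.subset_union_left, hA]
  have hAB : μ ({0, 1} ∪ {0, 2, 3}) = ENNReal.ofReal 1 := by
    rw [key]; congr 1; simp [Set.indicator]; rw [ha, hb, hc, hd]; ring
  have hCA : μ ({0, 1, 2} ∩ {0, 1}) = ENNReal.ofReal t := by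
    rw [key]; congr 1; simp [Set.indicator]; rw [ha, hb]; ring
  have hU : μ Set.univ = 1 := by
    rw [key, ← ENNReal.ofReal_one]; congr 1; simp; rw [ha, hb, hc, hd]; ring
  refine ⟨μ, ⟨hU⟩, {0, 1}, {0, 2, 3}, {0, 1, 2}, ?_, ?_, ?_, ?_, ?_, ?_⟩
  · rw [hA]; exact ENNReal.ofReal_pos.2 htpos
  · rw [hB]; exact ENNReal.ofReal_pos.2 hyt
  · rw [condProb, hCB, hB, ENNReal.toReal_ofReal (by positivity), ENNReal.toReal_ofReal hyt.le]
    exact mul_div_cancel_right₀ _ hyt.ne'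
  · rw [condProb, hBA, hA, ENNReal.toReal_ofReal (by positivity), ENNReal.toReal_ofReal ht0]
    exact mul_div_cancel_right₀ _ htpos.ne'
  · rw [condProb, hAAB, hAB, ENNReal.toReal_ofReal ht0, ENNReal.toReal_ofReal zero_le_one, div_one]
  · rw [condProb, hCA, hA, ENNReal.toReal_ofReal ht0]
    exact div_self htpos.ne'
end

section
/- Let μ be a probability measure on a measurable space Ω and let A, B, C be events with μ(A) > 0 and μ(B) > 0. If p(C|B) = 1 and p(B|A) > 0, then p(C|A) > 0, that is, p(Cᶜ|A) < 1. -/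
open MeasureTheory

theorem modus_darii {Ω : Type*} [MeasurableSpace Ω]
    (μ : Measure Ω) [IsProbabilityMeasure μ] (A B C : Set Ω)
    (hA : MeasurableSet A) (hB : MeasurableSet B) (hC : MeasurableSet C)
    (hApos : 0 < μ A) (hBpos : 0 < μ B)
    (h1 : condProb μ C B = 1) (h2 : 0 < condProb μ B A) :
    0 < condProb μ C A ∧ condProb μ Cᶜ A < 1 := by
  have hA' : 0 < μ.real A := ENNReal.toReal_pos hApos.ne' (measure_ne_top μ A)
  have hB' : 0 < μ.real B := ENNReal.toReal_pos hBpos.ne' (measure_ne_top μ B)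
  change μ.real (C ∩ B) / μ.real B = 1 at h1
  change 0 < μ.real (B ∩ A) / μ.real A at h2
  change 0 < μ.real (C ∩ A) / μ.real A ∧ μ.real (Cᶜ ∩ A) / μ.real A < 1
  rw [div_eq_one_iff_eq hB'.ne'] at h1
  have h3 : 0 < μ.real (B ∩ A) := (div_pos_iff_of_pos_right hA').1 h2
  have split : ∀ S : Set Ω, μ.real (C ∩ S) + μ.real (Cᶜ ∩ S) = μ.real S := by
    intro S
    have h := measureReal_inter_add_diff (μ := μ) (s := S) hC
    rwa [Set.diff_eq, Set.inter_comm S C, Set.inter_comm S Cᶜ] at h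
  have hb := split B
  have ha := split A
  have hab := split (B ∩ A)
  have m1 : μ.real (C ∩ (B ∩ A)) ≤ μ.real (C ∩ A) :=
    measureReal_mono (Set.inter_subset_inter_right C Set.inter_subset_right)
  have m2 : μ.real (Cᶜ ∩ (B ∩ A)) ≤ μ.real (Cᶜ ∩ B) :=
    measureReal_mono (Set.inter_subset_inter_right Cᶜ Set.inter_subset_left)
  have hpos : 0 < μ.real (C ∩ A) := by linarith
  refine ⟨div_pos hpos hA', ?_⟩
  rw [div_lt_one hA']
  linarith
end

section
/- Let μ be a probability measure on a measurable space Ω and let A, B, C be events with μ(B) > 0 and p(A|B) > 0 (hence μ(A) > 0). If p(C|B) = 1 and p(B|A) = 1, then p(C|A) = 1. (Theorem 6 of the paper: the knowledge base (B ⇝ C, A ⇝ B, B ⇸ ¬A) p-entails A ⇝ C; the negated default B ⇸ ¬A is the stronger existential import assumption p(A|B) > 0.) -/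
open MeasureTheory

theorem modus_barbara_strong_import {Ω : Type*} [MeasurableSpace Ω]
    (μ : Measure Ω) [IsProbabilityMeasure μ] (A B C : Set Ω)
    (hA : MeasurableSet A) (hB : MeasurableSet B) (hC : MeasurableSet C)
    (hBpos : 0 < μ B) (hAB : 0 < condProb μ A B)
    (h1 : condProb μ C B = 1) (h2 : condProb μ B A = 1) :
    condProb μ C A = 1 := by
  unfold condProb at *
  change μ.real (C ∩ B) / μ.real B = 1 at h1
  change μ.real (B ∩ A) / μ.real A = 1 at h2
  change μ.real (C ∩ A) / μ.real A = 1
  have hA0 : μ.real A ≠ 0 := by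
    intro h
    rw [h, div_zero] at h2
    exact zero_ne_one h2
  have hB0 : μ.real B ≠ 0 := by
    intro h
    rw [h, div_zero] at h1
    exact zero_ne_one h1
  rw [div_eq_one_iff_eq hB0, Set.inter_comm] at h1
  rw [div_eq_one_iff_eq hA0, Set.inter_comm] at h2
  rw [div_eq_one_iff_eq hA0, Set.inter_comm]
  have e1 := measureReal_inter_add_diff (μ := μ) (s := B) hC
  have e2 := measureReal_inter_add_diff (μ := μ) (s := A) hB
  have e3 := measureReal_inter_add_diff (μ := μ) (s := A) hC
  have hsub : A \ C ⊆ (A \ B) ∪ (B \ C) := by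
    rintro x ⟨hx, hc⟩
    by_cases hb : x ∈ B
    · exact Or.inr ⟨hb, hc⟩
    · exact Or.inl ⟨hx, hb⟩
  have e4 : μ.real (A \ C) ≤ μ.real ((A \ B) ∪ (B \ C)) := measureReal_mono hsub
  have e5 := measureReal_union_le (μ := μ) (A \ B) (B \ C)
  have e6 : 0 ≤ μ.real (A \ C) := measureReal_nonneg
  linarith
end

section
/- Let μ be a probability measure on a measurable space Ω and let A, B, C be events with μ(B) > 0 and p(A|B) > 0 (hence μ(A) > 0). If p(C|B) = 1 and p(B|A) > 0, then p(C|A) > 0, that is, p(¬C|A) < 1. (Theorem 7 of the paper: the knowledge base (B ⇝ C, A ⇸ ¬B, B ⇸ ¬A) p-entails A ⇸ ¬C.) -/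
open MeasureTheory

theorem modus_darii_strong_import {Ω : Type*} [MeasurableSpace Ω]
    (μ : Measure Ω) [IsProbabilityMeasure μ] (A B C : Set Ω)
    (hA : MeasurableSet A) (hB : MeasurableSet B) (hC : MeasurableSet C)
    (hBpos : 0 < μ B) (hAB : 0 < condProb μ A B)
    (h1 : condProb μ C B = 1) (h2 : 0 < condProb μ B A) :
    0 < condProb μ C A ∧ condProb μ Cᶜ A < 1 := by
  unfold condProb at *
  simp only [← measureReal_def] at *
  have hb : 0 < μ.real B := by
    rw [measureReal_def]
    exact ENNReal.toReal_pos hBpos.ne' (measure_ne_top μ B)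
  have ha : 0 < μ.real A := by
    rcases (measureReal_nonneg (μ := μ) (s := A)).eq_or_lt with h | h
    · rw [← h] at h2
      simp at h2
    · exact h
  have hBA : 0 < μ.real (B ∩ A) := (div_pos_iff_of_pos_right ha).1 h2
  have hCB : μ.real (C ∩ B) = μ.real B := (div_eq_one_iff_eq hb.ne').1 h1
  have e1 : μ.real (C ∩ B) + μ.real (Cᶜ ∩ B) = μ.real B := by
    have h := measureReal_inter_add_diff (μ := μ) (s := B) hC
    rwa [Set.inter_comm B C, Set.diff_eq, Set.inter_comm B Cᶜ] at h
  have e2 : μ.real (C ∩ A) + μ.real (Cᶜ ∩ A) = μ.real A := by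
    have h := measureReal_inter_add_diff (μ := μ) (s := A) hC
    rwa [Set.inter_comm A C, Set.diff_eq, Set.inter_comm A Cᶜ] at h
  have e3 : μ.real (B ∩ A) ≤ μ.real (C ∩ A) + μ.real (Cᶜ ∩ B) := by
    refine le_trans (measureReal_mono ?_) (measureReal_union_le _ _)
    rintro x ⟨hxB, hxA⟩
    by_cases hx : x ∈ C
    · exact Or.inl ⟨hx, hxA⟩
    · exact Or.inr ⟨hx, hxB⟩
  have hCA : 0 < μ.real (C ∩ A) := by linarith
  refine ⟨div_pos hCA ha, ?_⟩
  rw [div_lt_one ha]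
  linarith
end

section
/- Let x ∈ [0,1], y ∈ (0,1], and let z be a real number with max{0, (x + y − 1)/y} ≤ z ≤ min{1, x/y}. Then there exist a probability measure μ on a finite sample space and events A, B, C with μ(A) > 0 and μ(A ∩ B) > 0 such that p(C|A) = x, p(B|A) = y, and p(C|A ∩ B) = z. (Attainability direction of the propagation rule for the premise set (C|A, B|A) and conclusion C|AB, cited as Equation for [z', z''] in Example 1 of the paper.) -/
open MeasureTheory

theorem cautious_monotonicity_attainability (x y z : ℝ)
    (hx : x ∈ Set.Icc (0 : ℝ) 1) (hy : y ∈ Set.Ioc (0 : ℝ) 1)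
    (hzl : max 0 ((x + y - 1) / y) ≤ z)
    (hzu : z ≤ min 1 (x / y)) :
    ∃ (μ : Measure (Fin 4)) (_ : IsProbabilityMeasure μ) (A B C : Set (Fin 4)),
      0 < μ A ∧ 0 < μ (A ∩ B) ∧
      condProb μ C A = x ∧ condProb μ B A = y ∧
      condProb μ C (A ∩ B) = z := by
  obtain ⟨hx0, hx1⟩ := hx
  obtain ⟨hy0, hy1⟩ := hy
  obtain ⟨hz0, hzl⟩ := max_le_iff.mp hzl
  obtain ⟨hz1, hzu⟩ := le_min_iff.mp hzu
  rw [div_le_iff₀ hy0] at hzl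
  rw [le_div_iff₀ hy0] at hzu
  have h0 : 0 ≤ z * y := by positivity
  have h1 : 0 ≤ y - z * y := by nlinarith
  have h2 : 0 ≤ x - z * y := by linarith
  have h3 : 0 ≤ 1 - x - y + z * y := by linarith
  let μ : Measure (Fin 4) :=
    ENNReal.ofReal (z * y) • Measure.dirac 0 + ENNReal.ofReal (y - z * y) • Measure.dirac 1 +
    ENNReal.ofReal (x - z * y) • Measure.dirac 2 +
    ENNReal.ofReal (1 - x - y + z * y) • Measure.dirac 3
  have hU : μ Set.univ = 1 := by
    simp only [μ, Measure.add_apply, Measure.smul_apply, measure_univ, smul_eq_mul, mul_one]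
    rw [← ENNReal.ofReal_add h0 h1, ← ENNReal.ofReal_add (by linarith) h2,
      ← ENNReal.ofReal_add (by linarith) h3, ← ENNReal.ofReal_one]
    congr 1
    ring
  have hB : μ {0, 1} = ENNReal.ofReal y := by
    simp [μ, Set.indicator]
    rw [← ENNReal.ofReal_add h0 h1]
    congr 1
    ring
  have hC : μ {0, 2} = ENNReal.ofReal x := by
    simp [μ, Set.indicator]
    rw [← ENNReal.ofReal_add h0 h2]
    congr 1
    ring
  have hCB : μ ({0, 2} ∩ {0, 1}) = ENNReal.ofReal (z * y) := by
    simp [μ, Set.indicator]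
  refine ⟨μ, ⟨hU⟩, Set.univ, {0, 1}, {0, 2}, ?_, ?_, ?_, ?_, ?_⟩
  · rw [hU]; exact one_pos
  · rw [Set.univ_inter, hB]; exact ENNReal.ofReal_pos.mpr hy0
  · simp only [condProb, Set.inter_univ, hC, hU]
    simp [hx0]
  · simp only [condProb, Set.inter_univ, hB, hU]
    simp [hy0.le]
  · simp only [condProb, Set.univ_inter, hB, hCB]
    rw [ENNReal.toReal_ofReal h0, ENNReal.toReal_ofReal hy0.le]
    field_simp
end

section
/- Let (x, y, t) ∈ [0,1]³ with t > 0 and y·t + 1 − t > 0. Then there exist a probability measure μ on a finite sample space and events A, B, C with μ(A) > 0 and μ(B) > 0 such that p(C|B) = x, p(B|A) = y, and p(A|A ∪ B) = t. (Probability-measure version, for conditioning events of positive probability, of Remark 2 of the paper: the imprecise assessment [0,1]³ on (C|B, B|A, A|(A ∨ B)) is totally coherent.) -/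
open MeasureTheory

open Classical in
theorem fin6_measure_exists (w : Fin 6 → ℝ) (hw : ∀ i, 0 ≤ w i) :
    ∃ μ : Measure (Fin 6), ∀ S : Set (Fin 6),
      μ S = ENNReal.ofReal (∑ i, if i ∈ S then w i else 0) := by
  refine ⟨∑ i, ENNReal.ofReal (w i) • Measure.dirac i, fun S => ?_⟩
  rw [ENNReal.ofReal_sum_of_nonneg (fun i _ => by split_ifs <;> simp [hw])]
  rw [Measure.finsetSum_apply]
  refine Finset.sum_congr rfl fun i _ => ?_
  by_cases h : i ∈ S <;> simp [h]

theorem weak_transitivity_total_coherence (x y t : ℝ)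
    (hx : x ∈ Set.Icc (0 : ℝ) 1) (hy : y ∈ Set.Icc (0 : ℝ) 1)
    (ht : t ∈ Set.Icc (0 : ℝ) 1) (htpos : 0 < t)
    (hyt : 0 < y * t + 1 - t) :
    ∃ (μ : Measure (Fin 6)) (_ : IsProbabilityMeasure μ) (A B C : Set (Fin 6)),
      0 < μ A ∧ 0 < μ B ∧
      condProb μ C B = x ∧ condProb μ B A = y ∧
      condProb μ A (A ∪ B) = t := by
  obtain ⟨hx0, hx1⟩ := hx
  obtain ⟨hy0, hy1⟩ := hy
  obtain ⟨ht0, ht1⟩ := ht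
  have hx' : 0 ≤ 1 - x := by linarith
  have hy' : 0 ≤ 1 - y := by linarith
  have ht' : 0 ≤ 1 - t := by linarith
  obtain ⟨μ, hμ⟩ := fin6_measure_exists
    ![x * y * t, (1 - x) * y * t, (1 - y) * t, x * (1 - t), (1 - x) * (1 - t), 0]
    (by intro i; fin_cases i <;> simp <;> positivity)
  have hA : μ {0, 1, 2} = ENNReal.ofReal t := by
    rw [hμ]; congr 1; simp [Fin.sum_univ_six]; ring
  have hB : μ {0, 1, 3, 4} = ENNReal.ofReal (y * t + 1 - t) := by
    rw [hμ]; congr 1; simp [Fin.sum_univ_six]; ring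
  have hAB : μ ({0, 1, 2} ∪ {0, 1, 3, 4}) = 1 := by
    rw [hμ, ← ENNReal.ofReal_one]; congr 1; simp [Fin.sum_univ_six]; ring
  have hU : μ Set.univ = 1 := by
    rw [hμ, ← ENNReal.ofReal_one]; congr 1; simp [Fin.sum_univ_six]; ring
  have hCB : μ ({0, 3} ∩ {0, 1, 3, 4}) = ENNReal.ofReal (x * (y * t + 1 - t)) := by
    rw [hμ]; congr 1; simp [Fin.sum_univ_six]; ring
  have hBA : μ ({0, 1, 3, 4} ∩ {0, 1, 2}) = ENNReal.ofReal (y * t) := by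
    rw [hμ]; congr 1; simp [Fin.sum_univ_six]; ring
  refine ⟨μ, ⟨hU⟩, {0, 1, 2}, {0, 1, 3, 4}, {0, 3}, ?_, ?_, ?_, ?_, ?_⟩
  · rw [hA]; simpa using htpos
  · rw [hB]; exact ENNReal.ofReal_pos.2 hyt
  · rw [condProb, hCB, hB, ENNReal.toReal_ofReal (by positivity),
      ENNReal.toReal_ofReal hyt.le]
    field_simp
  · rw [condProb, hBA, hA, ENNReal.toReal_ofReal (by positivity),
      ENNReal.toReal_ofReal ht0]
    field_simp
  · rw [condProb, Set.inter_eq_left.2 Set.subset_union_left, hA, hAB,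
      ENNReal.toReal_ofReal ht0]
    simp
end
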